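/- Let (X, μ) be a σ-finite measure space, S a semi-doubly stochastic operator on L¹(X,μ), and F a finite-dimensional linear subspace of L¹(X,μ). Then there exists a sequence (I_n)_{n∈ℕ} of semi-doubly stochastic integral operators on L¹(X,μ) such that ‖I_n h − S h‖₁ → 0 as n → ∞ for every h ∈ F. -/

import Mathlib

open MeasureTheory Filter Topology

/-- `T : L¹(X,μ) → L¹(X,μ)` is a semi-doubly stochastic operator: it is positive,
integral preserving, and `∫_E T χ_B dμ ≤ μ(E)` for all measurable sets `E, B` of finite
measure. -/
def IsSemiDoublyStochastic {X : Type*} [MeasurableSpace X] {μ : Measure X}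
    (T : Lp ℝ 1 μ →L[ℝ] Lp ℝ 1 μ) : Prop :=
  (∀ f : Lp ℝ 1 μ, 0 ≤ᵐ[μ] (f : X → ℝ) → 0 ≤ᵐ[μ] (T f : X → ℝ)) ∧
  (∀ f : Lp ℝ 1 μ, ∫ x, (T f : X → ℝ) x ∂μ = ∫ x, (f : X → ℝ) x ∂μ) ∧
  (∀ E B : Set X, ∀ (_ : MeasurableSet E) (_ : μ E < ⊤) (hB : MeasurableSet B)
    (hBfin : μ B < ⊤),
    ∫ x in E, (T (indicatorConstLp 1 hB hBfin.ne (1 : ℝ)) : X → ℝ) x ∂μ ≤ (μ E).toReal)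

/-- `K : X × X → [0,∞)` is a semi-doubly stochastic kernel: `∫ K(x,y) dμ(x) = 1` for a.e. `y`
and `∫ K(x,y) dμ(y) ≤ 1` for a.e. `x`. -/
def IsSemiDoublyStochasticKernel {X : Type*} [MeasurableSpace X] (μ : Measure X)
    (K : X → X → ℝ) : Prop :=
  Measurable (Function.uncurry K) ∧ (∀ x y, 0 ≤ K x y) ∧
  (∀ᵐ y ∂μ, ∫⁻ x, ENNReal.ofReal (K x y) ∂μ = 1) ∧
  (∀ᵐ x ∂μ, ∫⁻ y, ENNReal.ofReal (K x y) ∂μ ≤ 1)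

/-- `T` is a semi-doubly stochastic integral operator: `(Tf)(x) = ∫ K(x,y) f(y) dμ(y)` for
some semi-doubly stochastic kernel `K`. -/
def IsSemiDoublyStochasticIntegralOperator {X : Type*} [MeasurableSpace X] {μ : Measure X}
    (T : Lp ℝ 1 μ →L[ℝ] Lp ℝ 1 μ) : Prop :=
  ∃ K : X → X → ℝ, IsSemiDoublyStochasticKernel μ K ∧
    ∀ f : Lp ℝ 1 μ, (T f : X → ℝ) =ᵐ[μ] fun x => ∫ y, K x y * (f : X → ℝ) y ∂μ

/-!
Partition `X` by a measurable map `p : X → ℕ` into fibers `B i` of finite measure.  Averaging a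
function over the fibers and then applying `S` is an integral operator, with kernel
`(S χ_{B i})(x) / μ(B i)`, `i = p y`: its columns integrate to `1` since
`∫ S χ_{B i} = μ(B i)`, and its rows to at most `1` since `∑ S χ_{B i} = S χ_{⋃ B i} ≤ 1` over
finitely many `i`.  It agrees with `S` on the integrable functions that factor through `p`, and `p`
can be chosen so that these come arbitrarily close to any finitely many elements of `L¹`.  As the
integral operators are contractions, taking ever larger finite subsets of a countable dense set
gives, by equicontinuity, a sequence that converges on a whole separable set.
-/

open scoped ENNReal NNReal

section KernelOperator

variable {X Y 𝕜 E : Type*} [MeasurableSpace X] [MeasurableSpace Y] {μ : Measure X} {ν : Measure Y}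
  [NontriviallyNormedField 𝕜] [NormedAddCommGroup E] [NormedSpace 𝕜 E] {K : X → Y → 𝕜} {C : ℝ≥0}

theorem aestronglyMeasurable_kernel_smul
    (hK : AEStronglyMeasurable (Function.uncurry K) (μ.prod ν)) {f : Y → E}
    (hf : AEStronglyMeasurable f ν) :
    AEStronglyMeasurable (fun z : X × Y => K z.1 z.2 • f z.2) (μ.prod ν) :=
  hK.smul hf.comp_snd

variable [SFinite μ] [SFinite ν]

theorem lintegral_enorm_kernel_smul_le
    (hK : AEStronglyMeasurable (Function.uncurry K) (μ.prod ν))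
    (hKC : ∀ᵐ y ∂ν, ∫⁻ x, ‖K x y‖ₑ ∂μ ≤ C) {f : Y → E} (hf : AEStronglyMeasurable f ν) :
    ∫⁻ z, ‖K z.1 z.2 • f z.2‖ₑ ∂(μ.prod ν) ≤ C * ∫⁻ y, ‖f y‖ₑ ∂ν := by
  calc
    ∫⁻ z, ‖K z.1 z.2 • f z.2‖ₑ ∂(μ.prod ν) = ∫⁻ y, (∫⁻ x, ‖K x y‖ₑ ∂μ) * ‖f y‖ₑ ∂ν := by
      rw [lintegral_prod_symm _ (aestronglyMeasurable_kernel_smul hK hf).enorm]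
      simp only [enorm_smul, lintegral_mul_const' _ _ enorm_ne_top]
    _ ≤ ∫⁻ y, C * ‖f y‖ₑ ∂ν := by
      refine lintegral_mono_ae ?_
      filter_upwards [hKC] with y hy using by gcongr
    _ = C * ∫⁻ y, ‖f y‖ₑ ∂ν := lintegral_const_mul' _ _ ENNReal.coe_ne_top

theorem integrable_kernel_smul (hK : AEStronglyMeasurable (Function.uncurry K) (μ.prod ν))
    (hKC : ∀ᵐ y ∂ν, ∫⁻ x, ‖K x y‖ₑ ∂μ ≤ C) {f : Y → E} (hf : Integrable f ν) :
    Integrable (fun z : X × Y => K z.1 z.2 • f z.2) (μ.prod ν) :=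
  ⟨aestronglyMeasurable_kernel_smul hK hf.aestronglyMeasurable,
    (lintegral_enorm_kernel_smul_le hK hKC hf.aestronglyMeasurable).trans_lt
      (ENNReal.mul_lt_top ENNReal.coe_lt_top hf.hasFiniteIntegral)⟩

variable [NormedSpace ℝ E]

theorem integrable_integral_kernel_smul
    (hK : AEStronglyMeasurable (Function.uncurry K) (μ.prod ν))
    (hKC : ∀ᵐ y ∂ν, ∫⁻ x, ‖K x y‖ₑ ∂μ ≤ C) (f : Lp E 1 ν) :
    Integrable (fun x => ∫ y, K x y • f y ∂ν) μ :=
  (integrable_kernel_smul hK hKC (L1.integrable_coeFn f)).integral_prod_left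

theorem lintegral_enorm_integral_kernel_smul_le
    (hK : AEStronglyMeasurable (Function.uncurry K) (μ.prod ν))
    (hKC : ∀ᵐ y ∂ν, ∫⁻ x, ‖K x y‖ₑ ∂μ ≤ C) {f : Y → E} (hf : AEStronglyMeasurable f ν) :
    ∫⁻ x, ‖∫ y, K x y • f y ∂ν‖ₑ ∂μ ≤ C * ∫⁻ y, ‖f y‖ₑ ∂ν := by
  calc
    ∫⁻ x, ‖∫ y, K x y • f y ∂ν‖ₑ ∂μ ≤ ∫⁻ x, ∫⁻ y, ‖K x y • f y‖ₑ ∂ν ∂μ :=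
      lintegral_mono fun x => enorm_integral_le_lintegral_enorm _
    _ = ∫⁻ z, ‖K z.1 z.2 • f z.2‖ₑ ∂(μ.prod ν) :=
      (lintegral_prod _ (aestronglyMeasurable_kernel_smul hK hf).enorm).symm
    _ ≤ C * ∫⁻ y, ‖f y‖ₑ ∂ν := lintegral_enorm_kernel_smul_le hK hKC hf

theorem norm_toL1_integral_kernel_smul_le
    (hK : AEStronglyMeasurable (Function.uncurry K) (μ.prod ν))
    (hKC : ∀ᵐ y ∂ν, ∫⁻ x, ‖K x y‖ₑ ∂μ ≤ C) (f : Lp E 1 ν) :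
    ‖(integrable_integral_kernel_smul hK hKC f).toL1 _‖ ≤ C * ‖f‖ := by
  have h : ‖(integrable_integral_kernel_smul hK hKC f).toL1 _‖ₑ ≤ C * ‖f‖ₑ := by
    rw [Integrable.enorm_toL1, Lp.enorm_def, eLpNorm_one_eq_lintegral_enorm]
    exact lintegral_enorm_integral_kernel_smul_le hK hKC (L1.aestronglyMeasurable_coeFn f)
  rw [enorm_eq_nnnorm, enorm_eq_nnnorm] at h
  exact_mod_cast h

variable [SMulCommClass ℝ 𝕜 E]

/-- The integral operator `f ↦ ∫ K(·,y) f(y) dν(y)` from `L¹(ν)` to `L¹(μ)` of a kernel `K` whose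
columns have `L¹(μ)` norm at most `C`. -/
noncomputable def kernelIntegralCLM (K : X → Y → 𝕜)
    (hK : AEStronglyMeasurable (Function.uncurry K) (μ.prod ν))
    (hKC : ∀ᵐ y ∂ν, ∫⁻ x, ‖K x y‖ₑ ∂μ ≤ C) : Lp E 1 ν →L[𝕜] Lp E 1 μ :=
  LinearMap.mkContinuous
    { toFun := fun f => (integrable_integral_kernel_smul hK hKC f).toL1 _
      map_add' := fun f g => by
        rw [← Integrable.toL1_add, Integrable.toL1_eq_toL1_iff]
        filter_upwards [(integrable_kernel_smul hK hKC (L1.integrable_coeFn f)).prod_right_ae,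
          (integrable_kernel_smul hK hKC (L1.integrable_coeFn g)).prod_right_ae] with x hf hg
        rw [Pi.add_apply, ← integral_add hf hg]
        refine integral_congr_ae ?_
        filter_upwards [Lp.coeFn_add f g] with y hy
        rw [hy, Pi.add_apply, smul_add]
      map_smul' := fun c f => by
        rw [RingHom.id_apply, ← Integrable.toL1_smul, Integrable.toL1_eq_toL1_iff]
        refine ae_of_all _ fun x => ?_
        dsimp only
        rw [← integral_smul]
        refine integral_congr_ae ?_
        filter_upwards [Lp.coeFn_smul c f] with y hy
        rw [hy, Pi.smul_apply, smul_comm] }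
    C (norm_toL1_integral_kernel_smul_le hK hKC)

theorem coeFn_kernelIntegralCLM (hK : AEStronglyMeasurable (Function.uncurry K) (μ.prod ν))
    (hKC : ∀ᵐ y ∂ν, ∫⁻ x, ‖K x y‖ₑ ∂μ ≤ C) (f : Lp E 1 ν) :
    kernelIntegralCLM K hK hKC f =ᵐ[μ] fun x => ∫ y, K x y • f y ∂ν :=
  (integrable_integral_kernel_smul hK hKC f).coeFn_toL1

theorem norm_kernelIntegralCLM_le (hK : AEStronglyMeasurable (Function.uncurry K) (μ.prod ν))
    (hKC : ∀ᵐ y ∂ν, ∫⁻ x, ‖K x y‖ₑ ∂μ ≤ C) :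
    ‖(kernelIntegralCLM K hK hKC : Lp E 1 ν →L[𝕜] Lp E 1 μ)‖ ≤ C :=
  LinearMap.mkContinuous_norm_le _ C.2 _

end KernelOperator

section Fibers

variable {X ι E : Type*} [MeasurableSpace X] {μ : Measure X}

theorem sum_indicatorConstLp_of_pairwiseDisjoint [NormedAddCommGroup E] {q : ℝ≥0∞} {B : ι → Set X}
    (hB : ∀ i, MeasurableSet (B i)) (hBfin : ∀ i, μ (B i) ≠ ∞) {J : Finset ι}
    (hdisj : (J : Set ι).PairwiseDisjoint B) (hJfin : μ (⋃ i ∈ J, B i) ≠ ∞) (c : E) :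
    ∑ i ∈ J, indicatorConstLp q (hB i) (hBfin i) c =
      indicatorConstLp q (J.measurableSet_biUnion fun i _ => hB i) hJfin c := by
  have hcoe : ∀ᵐ x ∂μ, ∀ i ∈ J,
      indicatorConstLp q (hB i) (hBfin i) c x = (B i).indicator (fun _ => c) x :=
    (ae_ball_iff J.countable_toSet).2 fun i _ => indicatorConstLp_coeFn
  apply Lp.ext
  filter_upwards [hcoe, Lp.coeFn_fun_finsetSum J fun i => indicatorConstLp q (hB i) (hBfin i) c,
    indicatorConstLp_coeFn (p := q) (hs := J.measurableSet_biUnion fun i _ => hB i)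
      (hμs := hJfin) (c := c)] with x hx hsum hunion
  rw [hsum, hunion, Finset.indicator_biUnion_apply J B hdisj]
  exact Finset.sum_congr rfl hx

theorem smul_indicatorConstLp {𝕜 : Type*} [NormedField 𝕜] [NormedAddCommGroup E]
    [NormedSpace 𝕜 E] {q : ℝ≥0∞} {B : Set X} (hB : MeasurableSet B) (hBfin : μ B ≠ ∞) (a : 𝕜)
    (c : E) : a • indicatorConstLp q hB hBfin c = indicatorConstLp q hB hBfin (a • c) := by
  rw [indicatorConstLp, indicatorConstLp, ← MemLp.toLp_const_smul]
  congr 1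
  exact (Set.indicator_const_smul B a fun _ => c).symm

variable [Countable ι] [MeasurableSpace ι] [MeasurableSingletonClass ι]

theorem lintegral_comp_eq_tsum_fiber {p : X → ι} (hp : Measurable p) (F : ι → ℝ≥0∞) :
    ∫⁻ x, F (p x) ∂μ = ∑' i, F i * μ (p ⁻¹' {i}) := by
  rw [← lintegral_map (measurable_of_countable F) hp, lintegral_countable']
  simp only [Measure.map_apply hp (measurableSet_singleton _)]

theorem hasSum_indicatorConstLp_fiber [NormedAddCommGroup E] [CompleteSpace E] {p : X → ι}
    (hp : Measurable p) (hfin : ∀ i, μ (p ⁻¹' {i}) ≠ ∞) {φ : ι → E} {f : Lp E 1 μ}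
    (hf : f =ᵐ[μ] φ ∘ p) :
    HasSum (fun i => indicatorConstLp 1 (hp (measurableSet_singleton i)) (hfin i) (φ i)) f := by
  set u : ι → Lp E 1 μ :=
    fun i => indicatorConstLp 1 (hp (measurableSet_singleton i)) (hfin i) (φ i)
  have hu_norm : ∑' i, ‖u i‖ₑ = ‖f‖ₑ := by
    calc
      ∑' i, ‖u i‖ₑ = ∑' i, ‖φ i‖ₑ * μ (p ⁻¹' {i}) := by
        refine tsum_congr fun i => ?_
        rw [Lp.enorm_def, eLpNorm_congr_ae indicatorConstLp_coeFn,
          eLpNorm_indicator_const (hp (measurableSet_singleton i)) one_ne_zero ENNReal.one_ne_top]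
        simp
      _ = ∫⁻ x, ‖φ (p x)‖ₑ ∂μ := (lintegral_comp_eq_tsum_fiber hp fun i => ‖φ i‖ₑ).symm
      _ = ‖f‖ₑ := by
        rw [Lp.enorm_def, eLpNorm_one_eq_lintegral_enorm]
        exact lintegral_congr_ae (hf.fun_comp enorm).symm
  have hu_ne_top : ∑' i, ‖u i‖ₑ ≠ ∞ := hu_norm ▸ enorm_ne_top
  have hu_coe : ∀ᵐ x ∂μ, ∀ i, u i x = (p ⁻¹' {i}).indicator (fun _ => φ i) x :=
    ae_all_iff.2 fun i => indicatorConstLp_coeFn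
  have hu_tsum : ∑' i, u i = f := by
    apply Lp.ext
    filter_upwards [Lp.coeFn_tsum hu_ne_top, hu_coe, hf] with x htsum hx hfx
    rw [htsum, hfx, tsum_eq_single (p x) fun i hi => ?_]
    · simp [hx]
    · simp [hx, hi.symm]
  exact hu_tsum ▸ (Summable.of_enorm hu_ne_top).hasSum

theorem exists_nat_measurable_factorsThrough (μ : Measure X) [SigmaFinite μ] {κ : Type*} [Finite κ]
    (g : κ → SimpleFunc X E) :
    ∃ p : X → ℕ, Measurable p ∧ (∀ n, μ (p ⁻¹' {n}) ≠ ∞) ∧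
      ∀ k, (g k : X → E).FactorsThrough p := by
  obtain ⟨e, he⟩ := exists_injective_nat ((∀ k, (g k).range) × ℕ)
  let r : X → (∀ k, (g k).range) × ℕ :=
    fun x => (fun k => ⟨g k x, (g k).mem_range_self x⟩, spanningSetsIndex μ x)
  have hr : Measurable fun x => e (r x) := by
    let _ : MeasurableSpace E := ⊤
    exact (measurable_of_countable e).comp
      ((measurable_pi_lambda _ fun k => (g k).measurable.subtype_mk).prodMk
        (measurableSet_spanningSetsIndex μ))
  refine ⟨fun x => e (r x), hr, fun n => ?_, fun k x y hxy => ?_⟩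
  · obtain hn | ⟨x, hx⟩ := ((fun x => e (r x)) ⁻¹' {n}).eq_empty_or_nonempty
    · simp [hn]
    · refine measure_ne_top_of_subset (fun y hy => ?_)
        (measure_spanningSets_lt_top μ (spanningSetsIndex μ x)).ne
      have hxy : r y = r x := he (Eq.trans hy (Eq.symm hx))
      have hindex : spanningSetsIndex μ y = spanningSetsIndex μ x := congrArg Prod.snd hxy
      exact hindex ▸ mem_spanningSetsIndex μ y
  · exact congrArg (fun z => (z.1 k : E)) (he hxy)

end Fibers

section FiberKernel

variable {X Y ι : Type*} [MeasurableSpace Y] {ν : Measure Y} {p : Y → ι} {s : ι → X → ℝ≥0}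

/-- The kernel `(x, y) ↦ s i x / ν (p ⁻¹' {i})`, `i = p y`, whose integral operator averages a
function over each fiber of `p` and replaces the indicator of the `i`-th fiber by `s i`.  Its
columns over fibers of measure `0` vanish. -/
noncomputable def fiberKernel (ν : Measure Y) (p : Y → ι) (s : ι → X → ℝ≥0) (x : X) (y : Y) : ℝ :=
  s (p y) x / ν.real (p ⁻¹' {p y})

theorem fiberKernel_nonneg (x : X) (y : Y) : 0 ≤ fiberKernel ν p s x y :=
  div_nonneg NNReal.zero_le_coe measureReal_nonneg

theorem lintegral_fiberKernel_right_le [Countable ι] [MeasurableSpace ι]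
    [MeasurableSingletonClass ι] (hp : Measurable p) (hfin : ∀ i, ν (p ⁻¹' {i}) ≠ ∞) (x : X) :
    ∫⁻ y, ENNReal.ofReal (fiberKernel ν p s x y) ∂ν ≤ ∑' i, (s i x : ℝ≥0∞) := by
  rw [show ∫⁻ y, ENNReal.ofReal (fiberKernel ν p s x y) ∂ν = _ from
    lintegral_comp_eq_tsum_fiber hp fun i => ENNReal.ofReal (s i x / ν.real (p ⁻¹' {i}))]
  refine ENNReal.tsum_le_tsum fun i => ?_
  rw [← ofReal_measureReal (hfin i), ← ENNReal.ofReal_mul' measureReal_nonneg,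
    ← ENNReal.ofReal_coe_nnreal]
  refine ENNReal.ofReal_le_ofReal ?_
  obtain h | h := eq_or_ne (ν.real (p ⁻¹' {i})) 0
  · simp [h]
  · exact (div_mul_cancel₀ _ h).le

variable [MeasurableSpace X] {μ : Measure X}

theorem integral_fiberKernel_mul_indicator {i : ι} (hp : MeasurableSet (p ⁻¹' {i}))
    (hfin : ν (p ⁻¹' {i}) ≠ ∞) (hs : Measurable (s i))
    (hs_lintegral : ∫⁻ x, s i x ∂μ = ν (p ⁻¹' {i})) :
    ∀ᵐ x ∂μ, ∫ y, fiberKernel ν p s x y * (p ⁻¹' {i}).indicator (fun _ => 1) y ∂ν = s i x := by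
  have h_integral (x : X) : ∫ y, fiberKernel ν p s x y * (p ⁻¹' {i}).indicator (fun _ => 1) y ∂ν =
      ν.real (p ⁻¹' {i}) * (s i x / ν.real (p ⁻¹' {i})) := by
    rw [← smul_eq_mul, ← integral_indicator_const _ hp]
    congr with y
    by_cases hy : p y = i <;> simp [fiberKernel, hy]
  by_cases hi : ν (p ⁻¹' {i}) = 0
  · have hs_zero := (lintegral_eq_zero_iff hs.coe_nnreal_ennreal).1 (hs_lintegral.trans hi)
    filter_upwards [hs_zero] with x hx
    have hx : s i x = 0 := by simpa using hx
    simp [h_integral, hx]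
  · exact ae_of_all _ fun x => (h_integral x).trans
      (mul_div_cancel₀ _ (ENNReal.toReal_ne_zero.2 ⟨hi, hfin⟩))

variable [Countable ι]

theorem ae_measure_fiber_ne_zero (p : Y → ι) : ∀ᵐ y ∂ν, ν (p ⁻¹' {p y}) ≠ 0 := by
  have h : ∀ᵐ y ∂ν, ∀ i, ν (p ⁻¹' {i}) = 0 → p y ≠ i := by
    rw [ae_all_iff]
    intro i
    by_cases hi : ν (p ⁻¹' {i}) = 0
    · filter_upwards [measure_eq_zero_iff_ae_notMem.1 hi] with y hy _ using hy
    · exact ae_of_all _ fun y h => absurd h hi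
  filter_upwards [h] with y hy h0 using hy _ h0 rfl

theorem lintegral_fiberKernel_left (hfin : ∀ i, ν (p ⁻¹' {i}) ≠ ∞)
    (hs_lintegral : ∀ i, ∫⁻ x, s i x ∂μ = ν (p ⁻¹' {i})) :
    ∀ᵐ y ∂ν, ∫⁻ x, ENNReal.ofReal (fiberKernel ν p s x y) ∂μ = 1 := by
  filter_upwards [ae_measure_fiber_ne_zero p] with y hy
  have hpos : 0 < ν.real (p ⁻¹' {p y}) := ENNReal.toReal_pos hy (hfin _)
  simp only [fiberKernel, ENNReal.ofReal_div_of_pos hpos, ofReal_measureReal (hfin _),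
    ENNReal.ofReal_coe_nnreal]
  simp only [div_eq_mul_inv]
  rw [lintegral_mul_const' _ _ (ENNReal.inv_ne_top.2 hy), hs_lintegral,
    ENNReal.mul_inv_cancel hy (hfin _)]

variable [MeasurableSpace ι] [MeasurableSingletonClass ι]

theorem measurable_uncurry_fiberKernel (hp : Measurable p) (hs : ∀ i, Measurable (s i)) :
    Measurable (Function.uncurry (fiberKernel ν p s)) := by
  have h : Measurable fun z : X × ι => (s z.2 z.1 : ℝ) / ν.real (p ⁻¹' {z.2}) :=
    measurable_from_prod_countable_left fun i =>
      (hs i).coe_nnreal_real.div_const (ν.real (p ⁻¹' {i}))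
  exact h.comp (measurable_fst.prodMk (hp.comp measurable_snd))

theorem isSemiDoublyStochasticKernel_fiberKernel {p : X → ι} (hp : Measurable p)
    (hfin : ∀ i, μ (p ⁻¹' {i}) ≠ ∞) (hs : ∀ i, Measurable (s i))
    (hs_lintegral : ∀ i, ∫⁻ x, s i x ∂μ = μ (p ⁻¹' {i}))
    (hs_tsum : ∀ᵐ x ∂μ, ∑' i, (s i x : ℝ≥0∞) ≤ 1) :
    IsSemiDoublyStochasticKernel μ (fiberKernel μ p s) := by
  refine ⟨measurable_uncurry_fiberKernel hp hs, fiberKernel_nonneg,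
    lintegral_fiberKernel_left hfin hs_lintegral, ?_⟩
  filter_upwards [hs_tsum] with x hx using (lintegral_fiberKernel_right_le hp hfin x).trans hx

end FiberKernel

namespace IsSemiDoublyStochasticKernel

variable {X : Type*} [MeasurableSpace X] {μ : Measure X} {K : X → X → ℝ}

theorem aestronglyMeasurable_uncurry (hK : IsSemiDoublyStochasticKernel μ K) :
    AEStronglyMeasurable (Function.uncurry K) (μ.prod μ) :=
  hK.1.aestronglyMeasurable

theorem lintegral_enorm_left_le (hK : IsSemiDoublyStochasticKernel μ K) :
    ∀ᵐ y ∂μ, ∫⁻ x, ‖K x y‖ₑ ∂μ ≤ (1 : ℝ≥0) := by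
  filter_upwards [hK.2.2.1] with y hy
  simp only [Real.enorm_of_nonneg (hK.2.1 _ _), hy, ENNReal.coe_one, le_refl]

variable [SFinite μ]

/-- The operator on `L¹(μ)` associated with a semi-doubly stochastic kernel. -/
noncomputable def toCLM (hK : IsSemiDoublyStochasticKernel μ K) : Lp ℝ 1 μ →L[ℝ] Lp ℝ 1 μ :=
  kernelIntegralCLM K hK.aestronglyMeasurable_uncurry hK.lintegral_enorm_left_le

theorem coeFn_toCLM (hK : IsSemiDoublyStochasticKernel μ K) (f : Lp ℝ 1 μ) :
    hK.toCLM f =ᵐ[μ] fun x => ∫ y, K x y * f y ∂μ :=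
  coeFn_kernelIntegralCLM hK.aestronglyMeasurable_uncurry hK.lintegral_enorm_left_le f

theorem norm_toCLM_le_one (hK : IsSemiDoublyStochasticKernel μ K) : ‖hK.toCLM‖ ≤ 1 :=
  norm_kernelIntegralCLM_le hK.aestronglyMeasurable_uncurry hK.lintegral_enorm_left_le

theorem isSemiDoublyStochasticIntegralOperator_toCLM (hK : IsSemiDoublyStochasticKernel μ K) :
    IsSemiDoublyStochasticIntegralOperator hK.toCLM :=
  ⟨K, hK, hK.coeFn_toCLM⟩

end IsSemiDoublyStochasticKernel

theorem IsSemiDoublyStochasticIntegralOperator.norm_le_one {X : Type*} [MeasurableSpace X]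
    {μ : Measure X} [SFinite μ] {A : Lp ℝ 1 μ →L[ℝ] Lp ℝ 1 μ}
    (hA : IsSemiDoublyStochasticIntegralOperator A) : ‖A‖ ≤ 1 := by
  obtain ⟨K, hK, hAK⟩ := hA
  have hA_eq : A = hK.toCLM := by
    ext1 f
    exact Lp.ext ((hAK f).trans (hK.coeFn_toCLM f).symm)
  exact hA_eq ▸ hK.norm_toCLM_le_one

namespace IsSemiDoublyStochastic

variable {X ι : Type*} [MeasurableSpace X] {μ : Measure X} {S : Lp ℝ 1 μ →L[ℝ] Lp ℝ 1 μ}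

theorem apply_indicator_nonneg (hS : IsSemiDoublyStochastic S) {B : Set X} (hB : MeasurableSet B)
    (hBfin : μ B ≠ ∞) : 0 ≤ᵐ[μ] S (indicatorConstLp 1 hB hBfin 1) := by
  refine hS.1 _ ?_
  filter_upwards [indicatorConstLp_coeFn (p := 1) (hs := hB) (hμs := hBfin) (c := (1 : ℝ))]
    with x hx
  exact hx ▸ Set.indicator_nonneg (fun _ _ => zero_le_one) x

theorem lintegral_apply_indicator (hS : IsSemiDoublyStochastic S) {B : Set X}
    (hB : MeasurableSet B) (hBfin : μ B ≠ ∞) :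
    ∫⁻ x, ENNReal.ofReal (S (indicatorConstLp 1 hB hBfin 1) x) ∂μ = μ B := by
  rw [← ofReal_integral_eq_lintegral_ofReal (L1.integrable_coeFn _)
    (hS.apply_indicator_nonneg hB hBfin), hS.2.1, integral_indicatorConstLp, smul_eq_mul, mul_one,
    ofReal_measureReal hBfin]

variable [SigmaFinite μ]

theorem apply_indicator_le_one (hS : IsSemiDoublyStochastic S) {B : Set X} (hB : MeasurableSet B)
    (hBfin : μ B ≠ ∞) : ∀ᵐ x ∂μ, S (indicatorConstLp 1 hB hBfin 1) x ≤ 1 := by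
  have hint := L1.integrable_coeFn (S (indicatorConstLp 1 hB hBfin 1))
  have h : 0 ≤ᵐ[μ] fun x => 1 - S (indicatorConstLp 1 hB hBfin 1) x := by
    have hone {E : Set X} (hEfin : μ E < ∞) : IntegrableOn (fun _ => (1 : ℝ)) E μ :=
      integrableOn_const hEfin.ne
    refine ae_nonneg_of_forall_setIntegral_nonneg_of_sigmaFinite
      (fun E _ hEfin => (hone hEfin).sub hint.integrableOn) fun E hE hEfin => ?_
    rw [integral_sub (hone hEfin) hint.integrableOn, setIntegral_const, smul_eq_mul, mul_one]
    exact sub_nonneg.2 (hS.2.2 E B hE hEfin hB hBfin.lt_top)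
  filter_upwards [h] with x hx using sub_nonneg.1 hx

theorem sum_apply_indicator_le_one (hS : IsSemiDoublyStochastic S) {B : ι → Set X}
    (hB : ∀ i, MeasurableSet (B i)) (hBfin : ∀ i, μ (B i) ≠ ∞)
    (J : Finset ι) (hdisj : (J : Set ι).PairwiseDisjoint B) :
    ∀ᵐ x ∂μ, ∑ i ∈ J, S (indicatorConstLp 1 (hB i) (hBfin i) 1) x ≤ 1 := by
  have hJfin : μ (⋃ i ∈ J, B i) ≠ ∞ :=
    (measure_biUnion_lt_top J.finite_toSet fun i _ => (hBfin i).lt_top).ne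
  have hle := hS.apply_indicator_le_one (J.measurableSet_biUnion fun i _ => hB i) hJfin
  rw [← sum_indicatorConstLp_of_pairwiseDisjoint hB hBfin hdisj, map_sum] at hle
  filter_upwards [hle, Lp.coeFn_fun_finsetSum J fun i => S (indicatorConstLp 1 (hB i) (hBfin i) 1)]
    with x hx hsum
  exact hsum ▸ hx

theorem tsum_ofReal_apply_indicator_le_one [Countable ι] (hS : IsSemiDoublyStochastic S)
    {B : ι → Set X} (hB : ∀ i, MeasurableSet (B i)) (hBfin : ∀ i, μ (B i) ≠ ∞)
    (hdisj : Pairwise (Function.onFun Disjoint B)) :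
    ∀ᵐ x ∂μ, ∑' i, ENNReal.ofReal (S (indicatorConstLp 1 (hB i) (hBfin i) 1) x) ≤ 1 := by
  filter_upwards [ae_all_iff.2 fun i => hS.apply_indicator_nonneg (hB i) (hBfin i),
    ae_all_iff.2 fun J : Finset ι =>
      hS.sum_apply_indicator_le_one hB hBfin J (hdisj.set_pairwise _)] with x hnonneg hle
  refine ENNReal.summable.tsum_le_of_sum_le fun J => ?_
  rw [← ENNReal.ofReal_sum_of_nonneg fun i _ => hnonneg i]
  exact ENNReal.ofReal_le_one.2 (hle J)

variable [Countable ι] [MeasurableSpace ι] [MeasurableSingletonClass ι]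

theorem exists_integralOperator_apply_fiber (hS : IsSemiDoublyStochastic S) {p : X → ι}
    (hp : Measurable p) (hfin : ∀ i, μ (p ⁻¹' {i}) ≠ ∞) :
    ∃ A : Lp ℝ 1 μ →L[ℝ] Lp ℝ 1 μ, IsSemiDoublyStochasticIntegralOperator A ∧
      ∀ i, A (indicatorConstLp 1 (hp (measurableSet_singleton i)) (hfin i) 1) =
        S (indicatorConstLp 1 (hp (measurableSet_singleton i)) (hfin i) 1) := by
  have hfiber (i : ι) : MeasurableSet (p ⁻¹' {i}) := hp (measurableSet_singleton i)
  let s (i : ι) (x : X) : ℝ≥0 := (S (indicatorConstLp 1 (hfiber i) (hfin i) 1) x).toNNReal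
  have hs (i : ι) : Measurable (s i) := (Lp.stronglyMeasurable _).measurable.real_toNNReal
  have hs_lintegral (i : ι) : ∫⁻ x, s i x ∂μ = μ (p ⁻¹' {i}) :=
    hS.lintegral_apply_indicator (hfiber i) (hfin i)
  have hK : IsSemiDoublyStochasticKernel μ (fiberKernel μ p s) :=
    isSemiDoublyStochasticKernel_fiberKernel hp hfin hs hs_lintegral
      (hS.tsum_ofReal_apply_indicator_le_one hfiber hfin (pairwise_disjoint_fiber p))
  refine ⟨hK.toCLM, hK.isSemiDoublyStochasticIntegralOperator_toCLM, fun i => Lp.ext ?_⟩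
  filter_upwards [hK.coeFn_toCLM (indicatorConstLp 1 (hfiber i) (hfin i) 1),
    integral_fiberKernel_mul_indicator (hfiber i) (hfin i) (hs i) (hs_lintegral i),
    hS.apply_indicator_nonneg (hfiber i) (hfin i)] with x hA hintegral hnonneg
  calc
    hK.toCLM (indicatorConstLp 1 (hfiber i) (hfin i) 1) x
        = ∫ y, fiberKernel μ p s x y * (p ⁻¹' {i}).indicator (fun _ => 1) y ∂μ := by
      rw [hA]
      refine integral_congr_ae ?_
      filter_upwards [indicatorConstLp_coeFn (p := 1) (hs := hfiber i) (hμs := hfin i)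
        (c := (1 : ℝ))] with y hy
      rw [hy]
    _ = s i x := hintegral
    _ = S (indicatorConstLp 1 (hfiber i) (hfin i) 1) x := Real.coe_toNNReal _ hnonneg

theorem exists_integralOperator_apply_comp (hS : IsSemiDoublyStochastic S) {p : X → ι}
    (hp : Measurable p) (hfin : ∀ i, μ (p ⁻¹' {i}) ≠ ∞) :
    ∃ A : Lp ℝ 1 μ →L[ℝ] Lp ℝ 1 μ, IsSemiDoublyStochasticIntegralOperator A ∧
      ∀ (φ : ι → ℝ) (f : Lp ℝ 1 μ), f =ᵐ[μ] φ ∘ p → A f = S f := by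
  obtain ⟨A, hA, hAS⟩ := hS.exists_integralOperator_apply_fiber hp hfin
  refine ⟨A, hA, fun φ f hf => ?_⟩
  have hsum := hasSum_indicatorConstLp_fiber hp hfin hf
  have hterm (i : ι) : A (indicatorConstLp 1 (hp (measurableSet_singleton i)) (hfin i) (φ i)) =
      S (indicatorConstLp 1 (hp (measurableSet_singleton i)) (hfin i) (φ i)) := by
    rw [← mul_one (φ i), ← smul_eq_mul, ← smul_indicatorConstLp, map_smul, map_smul, hAS]
  have hSsum := S.hasSum hsum
  have hAsum := A.hasSum hsum
  simp only [hterm] at hAsum hSsum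
  exact hAsum.unique hSsum

end IsSemiDoublyStochastic

theorem IsSemiDoublyStochastic.exists_integralOperator_norm_sub_lt {X : Type*} [MeasurableSpace X]
    {μ : Measure X} [SigmaFinite μ] {S : Lp ℝ 1 μ →L[ℝ] Lp ℝ 1 μ} (hS : IsSemiDoublyStochastic S)
    (t : Finset (Lp ℝ 1 μ)) {ε : ℝ} (hε : 0 < ε) :
    ∃ A : Lp ℝ 1 μ →L[ℝ] Lp ℝ 1 μ, IsSemiDoublyStochasticIntegralOperator A ∧
      ∀ h ∈ t, ‖A h - S h‖ < ε := by
  have hS_pos : 0 < 1 + ‖S‖ := by positivity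
  choose g hg using fun h : Lp ℝ 1 μ =>
    (Lp.simpleFunc.denseRange ENNReal.one_ne_top).exists_dist_lt h (div_pos hε hS_pos)
  obtain ⟨p, hp, hfin, hfactor⟩ :=
    exists_nat_measurable_factorsThrough μ fun h : t => Lp.simpleFunc.toSimpleFunc (g h)
  obtain ⟨A, hA, hAS⟩ := hS.exists_integralOperator_apply_comp hp hfin
  refine ⟨A, hA, fun h hh => ?_⟩
  obtain ⟨φ, hφ⟩ := (Function.factorsThrough_iff _).1 (hfactor ⟨h, hh⟩)
  have hAg : A (g h) = S (g h) :=
    hAS φ _ ((Lp.simpleFunc.toSimpleFunc_eq_toFun (g h)).symm.trans (.of_eq hφ))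
  calc
    ‖A h - S h‖ = ‖(A - S) (h - g h)‖ := by simp [hAg]
    _ ≤ (‖A‖ + ‖S‖) * ‖h - g h‖ := (A - S).le_of_opNorm_le (norm_sub_le A S) _
    _ ≤ (1 + ‖S‖) * ‖h - g h‖ := by gcongr; exact hA.norm_le_one
    _ < (1 + ‖S‖) * (ε / (1 + ‖S‖)) := by
      gcongr
      exact dist_eq_norm h (g h : Lp ℝ 1 μ) ▸ hg h
    _ = ε := mul_div_cancel₀ _ hS_pos.ne'

section Approximation

variable {𝕜 E G : Type*} [NontriviallyNormedField 𝕜] [SeminormedAddCommGroup E]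
  [NormedSpace 𝕜 E] [SeminormedAddCommGroup G] [NormedSpace 𝕜 G]

theorem isClosed_setOf_tendsto_apply_of_norm_le {κ : Type*} {l : Filter κ} {I : κ → E →L[𝕜] G}
    {C : ℝ≥0} (hI : ∀ k, ‖I k‖ ≤ C) (S : E →L[𝕜] G) :
    IsClosed {x | Tendsto (fun k => I k x) l (𝓝 (S x))} :=
  (LipschitzWith.uniformEquicontinuous (fun k => I k) C fun k =>
    (I k).lipschitz.weaken (hI k)).equicontinuous.isClosed_setOfPred_tendsto S.continuous

theorem exists_seq_tendsto_apply_of_isSeparable {𝒜 : Set (E →L[𝕜] G)} {C : ℝ≥0}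
    (h𝒜 : ∀ A ∈ 𝒜, ‖A‖ ≤ C) {S : E →L[𝕜] G}
    (happrox : ∀ (t : Finset E) (ε : ℝ), 0 < ε → ∃ A ∈ 𝒜, ∀ x ∈ t, ‖A x - S x‖ < ε)
    {F : Set E} (hF : TopologicalSpace.IsSeparable F) :
    ∃ I : ℕ → E →L[𝕜] G, (∀ n, I n ∈ 𝒜) ∧
      ∀ x ∈ F, Tendsto (fun n => I n x) atTop (𝓝 (S x)) := by
  classical
  obtain ⟨D, hD, hFD⟩ := hF
  obtain ⟨u, hDu⟩ := Set.countable_iff_exists_subset_range.1 hD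
  choose I hI happrox using fun n : ℕ =>
    happrox ((Finset.range (n + 1)).image u) (1 / ((n : ℝ) + 1)) Nat.one_div_pos_of_nat
  refine ⟨I, hI, fun x hx => ?_⟩
  have hrange : Set.range u ⊆ {x | Tendsto (fun n => I n x) atTop (𝓝 (S x))} := by
    rintro _ ⟨k, rfl⟩
    refine tendsto_iff_norm_sub_tendsto_zero.2 (squeeze_zero' (.of_forall fun n => norm_nonneg _) ?_
      tendsto_one_div_add_atTop_nhds_zero_nat)
    filter_upwards [eventually_ge_atTop k] with n hn
    exact (happrox n _ (Finset.mem_image_of_mem u (by simpa using Nat.lt_succ_of_le hn))).le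
  exact closure_minimal (hDu.trans hrange)
    (isClosed_setOf_tendsto_apply_of_norm_le (fun n => h𝒜 _ (hI n)) S) (hFD hx)

end Approximation

theorem semiDoublyStochastic_approx_by_integral_operators_general
    {X : Type*} [MeasurableSpace X] (μ : Measure X) [SigmaFinite μ]
    (S : Lp ℝ 1 μ →L[ℝ] Lp ℝ 1 μ) (hS : IsSemiDoublyStochastic S)
    (F : Set (Lp ℝ 1 μ)) (hF : TopologicalSpace.IsSeparable F) :
    ∃ I : ℕ → (Lp ℝ 1 μ →L[ℝ] Lp ℝ 1 μ),
      (∀ n, IsSemiDoublyStochasticIntegralOperator (I n)) ∧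
      ∀ h ∈ F, Tendsto (fun n => ‖I n h - S h‖) atTop (𝓝 0) := by
  simp only [← tendsto_iff_norm_sub_tendsto_zero]
  exact exists_seq_tendsto_apply_of_isSeparable (C := 1)
    (𝒜 := {A | IsSemiDoublyStochasticIntegralOperator A}) (fun _ hA => hA.norm_le_one)
    (fun t _ hε => hS.exists_integralOperator_norm_sub_lt t hε) hF

/-- **Approximation by integral operators.**  On a σ-finite measure space, every semi-doubly
stochastic operator `S` can be approximated, in `L¹` norm on any finite-dimensional subspace
`F` of `L¹(X,μ)`, by a sequence of semi-doubly stochastic integral operators. -/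
theorem semiDoublyStochastic_approx_by_integral_operators
    {X : Type*} [MeasurableSpace X] (μ : Measure X) [SigmaFinite μ]
    (S : Lp ℝ 1 μ →L[ℝ] Lp ℝ 1 μ) (hS : IsSemiDoublyStochastic S)
    (F : Submodule ℝ (Lp ℝ 1 μ)) (hF : FiniteDimensional ℝ F) :
    ∃ I : ℕ → (Lp ℝ 1 μ →L[ℝ] Lp ℝ 1 μ),
      (∀ n, IsSemiDoublyStochasticIntegralOperator (I n)) ∧
      ∀ h : Lp ℝ 1 μ, h ∈ F →
        Tendsto (fun n => ‖I n h - S h‖) atTop (𝓝 0) := by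
  obtain ⟨t, rfl⟩ := (Submodule.fg_iff_finiteDimensional F).2 hF
  exact semiDoublyStochastic_approx_by_integral_operators_general μ S hS _
    t.countable_toSet.isSeparable.span
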